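/- Let α ∈ (0, π/2) with cos α = 1/√3, and for u, w, g ∈ {0,1} define the unit vector ψ_{uwg} ∈ ℂ² by ψ_{uwg} = (−1)^{gu}[ (−e^{iπ/4})^g cos(α/2) |g⊕w⟩ + (−1)^u (e^{iπ/4})^{1−g} sin(α/2) |1⊕g⊕w⟩ ], where |0⟩, |1⟩ is the standard basis of ℂ² and ⊕ is XOR. Set e₀ := ψ_{000}, e₁ := ψ_{001}, and define the Bell vectors Ψ^± = (e₀⊗e₁ ± e₁⊗e₀)/√2 and Φ^± = (e₀⊗e₀ ± e₁⊗e₁)/√2 in ℂ²⊗ℂ². Let β ∈ [0, 1/2] and let ρ = λ₀|Ψ^−⟩⟨Ψ^−| + λ₁|Φ^−⟩⟨Φ^−| + λ₂|Ψ^+⟩⟨Ψ^+| + λ₃|Φ^+⟩⟨Φ^+| with real λ₀,λ₁,λ₂,λ₃ satisfying λ₀+λ₁+λ₂+λ₃ = 1. If ⟨ψ_{uwg}⊗ψ_{uwg}| ρ |ψ_{uwg}⊗ψ_{uwg}⟩ = β/2 for all u, w, g ∈ {0,1}, then λ₁ = λ₂ = λ₃ = β/2 and λ₀ = 1 − (3/2)β.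 -/

import Mathlib

open Matrix ComplexOrder

/-- `√i = e^{iπ/4}`. -/
noncomputable def sqrtI : ℂ := Complex.exp (Real.pi / 4 * Complex.I)

/-- The 8-state (QOTP) encoding of bit `g` in basis `(u,w)`. -/
noncomputable def psi8 (α : ℝ) (u w g : Fin 2) : Fin 2 → ℂ := fun i =>
  (-1 : ℂ) ^ (g.val * u.val) *
    ((-sqrtI) ^ g.val * (Real.cos (α / 2) : ℂ) * (if i = g + w then 1 else 0) +
      (-1 : ℂ) ^ u.val * sqrtI ^ (1 - g.val) * (Real.sin (α / 2) : ℂ) *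
        (if i = 1 + g + w then 1 else 0))

/-- Tensor product of two qubit vectors. -/
noncomputable def tens (x y : Fin 2 → ℂ) : Fin 2 × Fin 2 → ℂ := fun p => x p.1 * y p.2

/-- Rank-one outer product `|v⟩⟨v|`. -/
noncomputable def outerProd {ι : Type*} (v : ι → ℂ) : Matrix ι ι ℂ :=
  Matrix.of fun i j => v i * (starRingEnd ℂ) (v j)

/-!
Measured against a vector `x ⊗ x`, the antisymmetric state `Ψ⁻` contributes nothing. If `x` has unit
Bloch vector `n` relative to `e0`, `e1`, the states `Φ⁻`, `Φ⁺`, `Ψ⁺` contribute `(1 - n₀²) / 2`,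
`(1 - n₁²) / 2`, `(1 - n₂²) / 2`. Let `N` be the matrix whose rows are the squared Bloch vectors of
three test states. Equal error rates say that `N` maps the weight vector to a constant vector; the
rows of `N` sum to `1`, so `N` fixes constant vectors, and if `N` is invertible the three weights
coincide, each being half the bit error rate. For `ψ_{000}`, `ψ_{100}`, `ψ_{010}` the determinant
of `N` is `sin² (2α) sin² α`.
-/

theorem star_tens_dotProduct_tens (v w x y : Fin 2 → ℂ) :
    star (tens v w) ⬝ᵥ tens x y = (star v ⬝ᵥ x) * (star w ⬝ᵥ y) := by
  simp only [dotProduct, tens, Finset.sum_mul_sum, Fintype.sum_prod_type, Pi.star_apply, star_mul']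
  exact Finset.sum_congr rfl fun i _ => Finset.sum_congr rfl fun j _ => by ring

theorem star_dotProduct_outerProd_mulVec {ι : Type*} [Fintype ι] (v x : ι → ℂ) :
    star x ⬝ᵥ outerProd v *ᵥ x = (Complex.normSq (star v ⬝ᵥ x) : ℂ) := by
  have houter : outerProd v = vecMulVec v (star v) := rfl
  rw [houter, vecMulVec_mulVec, op_smul_eq_smul, dotProduct_smul, smul_eq_mul,
    Complex.normSq_eq_conj_mul_self, starRingEnd_apply, ← star_dotProduct, mul_comm]

/-- The Bell-diagonal operator `l0 |Ψ⁻⟩⟨Ψ⁻| + l1 |Φ⁻⟩⟨Φ⁻| + l2 |Ψ⁺⟩⟨Ψ⁺| + l3 |Φ⁺⟩⟨Φ⁺|`, where the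
Bell vectors are formed with respect to the pair `e0`, `e1`. -/
noncomputable def bellDiagonal (e0 e1 : Fin 2 → ℂ) (l0 l1 l2 l3 : ℝ) :
    Matrix (Fin 2 × Fin 2) (Fin 2 × Fin 2) ℂ :=
  (l0 : ℂ) • outerProd ((Real.sqrt 2 : ℂ)⁻¹ • (tens e0 e1 - tens e1 e0)) +
    (l1 : ℂ) • outerProd ((Real.sqrt 2 : ℂ)⁻¹ • (tens e0 e0 - tens e1 e1)) +
    (l2 : ℂ) • outerProd ((Real.sqrt 2 : ℂ)⁻¹ • (tens e0 e1 + tens e1 e0)) +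
    (l3 : ℂ) • outerProd ((Real.sqrt 2 : ℂ)⁻¹ • (tens e0 e0 + tens e1 e1))

/-- The coincidence weight `⟨x ⊗ x| ρ |x ⊗ x⟩`: the probability that both halves of `ρ` are found in
the state `x`. It is left complex-valued, since `ρ` is an arbitrary matrix. -/
noncomputable def coincidence (ρ : Matrix (Fin 2 × Fin 2) (Fin 2 × Fin 2) ℂ) (x : Fin 2 → ℂ) : ℂ :=
  star (tens x x) ⬝ᵥ ρ *ᵥ tens x x

/-- The Bloch vector `(2 Re (a̅ b), 2 Im (a̅ b), |a|² - |b|²)` of a qubit vector with amplitudes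
`a = ⟨e0, x⟩` and `b = ⟨e1, x⟩`. -/
noncomputable def bloch (e0 e1 x : Fin 2 → ℂ) : Fin 3 → ℝ :=
  let a := star e0 ⬝ᵥ x
  let b := star e1 ⬝ᵥ x
  ![2 * (star a * b).re, 2 * (star a * b).im, Complex.normSq a - Complex.normSq b]

section Bloch

variable (e0 e1 x : Fin 2 → ℂ)

theorem normSq_amplitudes_sq_sub_sq :
    Complex.normSq ((star e0 ⬝ᵥ x) ^ 2 - (star e1 ⬝ᵥ x) ^ 2) =
      bloch e0 e1 x 1 ^ 2 + bloch e0 e1 x 2 ^ 2 := by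
  simp only [bloch, cons_val, Complex.normSq_apply, sq, Complex.sub_re, Complex.sub_im,
    Complex.mul_re, Complex.mul_im, Complex.star_def, Complex.conj_re, Complex.conj_im]
  ring

theorem normSq_two_mul_amplitudes :
    Complex.normSq (2 * (star e0 ⬝ᵥ x) * (star e1 ⬝ᵥ x)) =
      bloch e0 e1 x 0 ^ 2 + bloch e0 e1 x 1 ^ 2 := by
  simp only [bloch, cons_val, Complex.normSq_apply, Complex.mul_re, Complex.mul_im,
    Complex.re_ofNat, Complex.im_ofNat, Complex.star_def, Complex.conj_re, Complex.conj_im]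
  ring

theorem normSq_amplitudes_sq_add_sq :
    Complex.normSq ((star e0 ⬝ᵥ x) ^ 2 + (star e1 ⬝ᵥ x) ^ 2) =
      bloch e0 e1 x 0 ^ 2 + bloch e0 e1 x 2 ^ 2 := by
  simp only [bloch, cons_val, Complex.normSq_apply, sq, Complex.add_re, Complex.add_im,
    Complex.mul_re, Complex.mul_im, Complex.star_def, Complex.conj_re, Complex.conj_im]
  ring

theorem coincidence_bellDiagonal (l0 l1 l2 l3 : ℝ) :
    coincidence (bellDiagonal e0 e1 l0 l1 l2 l3) x =
      ((l1 * (bloch e0 e1 x 1 ^ 2 + bloch e0 e1 x 2 ^ 2) +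
        l2 * (bloch e0 e1 x 0 ^ 2 + bloch e0 e1 x 1 ^ 2) +
        l3 * (bloch e0 e1 x 0 ^ 2 + bloch e0 e1 x 2 ^ 2)) / 2 : ℝ) := by
  have hnormSq (z : ℂ) : Complex.normSq ((Real.sqrt 2 : ℂ)⁻¹ * z) = Complex.normSq z / 2 := by
    rw [map_mul, map_inv₀, Complex.normSq_ofReal, Real.mul_self_sqrt zero_le_two]
    ring
  rw [← normSq_amplitudes_sq_sub_sq, ← normSq_two_mul_amplitudes, ← normSq_amplitudes_sq_add_sq]
  simp only [coincidence, bellDiagonal, add_mulVec, dotProduct_add, smul_mulVec, dotProduct_smul,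
    star_dotProduct_outerProd_mulVec, star_smul, smul_dotProduct, star_sub, star_add,
    sub_dotProduct, add_dotProduct, star_tens_dotProduct_tens, star_inv₀, Complex.star_def,
    Complex.conj_ofReal, smul_eq_mul, hnormSq]
  have hcross : (star e0 ⬝ᵥ x) * (star e1 ⬝ᵥ x) + (star e1 ⬝ᵥ x) * (star e0 ⬝ᵥ x) =
      2 * (star e0 ⬝ᵥ x) * (star e1 ⬝ᵥ x) := by ring
  rw [hcross, mul_comm (star e1 ⬝ᵥ x), sub_self, map_zero, ← sq, ← sq]
  push_cast
  ring

end Bloch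

theorem card_sub_one_mul_eq_of_isUnit_det {ι R : Type*} [Fintype ι] [DecidableEq ι] [CommRing R]
    {N : Matrix ι ι R} {l : ι → R} {β : R} (hdet : IsUnit N.det) (hrow : ∀ k, ∑ i, N k i = 1)
    (hl : ∀ k, ∑ i, l i * (1 - N k i) = β) (i : ι) :
    ((Fintype.card ι : R) - 1) * l i = β := by
  have hconst : l = fun _ => ∑ j, l j - β := by
    refine mulVec_injective_of_isUnit ((isUnit_iff_isUnit_det N).2 hdet) (funext fun k => ?_)
    have hk := hl k
    simp only [mul_sub, mul_one, Finset.sum_sub_distrib] at hk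
    simp only [mulVec, dotProduct, mul_comm (N k _), ← Finset.mul_sum, hrow, mul_one, ← hk,
      sub_sub_cancel]
  have hsum : ∑ j, l j = Fintype.card ι * l i := by
    rw [Finset.sum_congr rfl fun j _ => (congrFun hconst j).trans (congrFun hconst i).symm,
      Finset.sum_const, Finset.card_univ, nsmul_eq_mul]
  linear_combination -hsum - congrFun hconst i

theorem bellDiagonal_weights_eq_of_coincidence {e0 e1 : Fin 2 → ℂ} {l0 l1 l2 l3 β : ℝ}
    (x : Fin 3 → Fin 2 → ℂ) (hunit : ∀ k, ∑ i, bloch e0 e1 (x k) i ^ 2 = 1)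
    (hdet : (of fun k i => bloch e0 e1 (x k) i ^ 2).det ≠ 0)
    (hx : ∀ k, coincidence (bellDiagonal e0 e1 l0 l1 l2 l3) (x k) = β / 2) :
    l1 = β / 2 ∧ l2 = β / 2 ∧ l3 = β / 2 := by
  -- `Φ⁻`, `Φ⁺`, `Ψ⁺` go with the Bloch coordinates `0`, `1`, `2`, hence the order of the weights.
  have hweights : ∀ k, ∑ i, ![l1, l3, l2] i * (1 - bloch e0 e1 (x k) i ^ 2) = β := by
    intro k
    have hk := hx k
    rw [coincidence_bellDiagonal] at hk
    norm_cast at hk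
    have hk_unit := hunit k
    simp only [Fin.sum_univ_three, cons_val] at hk_unit ⊢
    rw [← hk_unit]
    linarith
  have hhalf (i : Fin 3) : ![l1, l3, l2] i = β / 2 := by
    have hi := card_sub_one_mul_eq_of_isUnit_det hdet.isUnit hunit hweights i
    rw [Fintype.card_fin] at hi
    linear_combination hi / 2
  exact ⟨hhalf 0, hhalf 2, hhalf 1⟩

section EightState

theorem conj_sqrtI_mul_sqrtI : starRingEnd ℂ sqrtI * sqrtI = 1 := by
  rw [← Complex.normSq_eq_conj_mul_self, Complex.normSq_eq_norm_sq, sqrtI, Complex.norm_exp]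
  simp

theorem sqrtI_eq : sqrtI = ((Real.sqrt 2 / 2 : ℝ) : ℂ) * (1 + Complex.I) := by
  have harg : (Real.pi : ℂ) / 4 = ((Real.pi / 4 : ℝ) : ℂ) := by push_cast; rfl
  rw [sqrtI, harg, Complex.exp_mul_I, ← Complex.ofReal_cos, ← Complex.ofReal_sin,
    Real.cos_pi_div_four, Real.sin_pi_div_four]
  ring

variable (α : ℝ)

theorem psi8_zero_zero_zero :
    psi8 α 0 0 0 = ![(Real.cos (α / 2) : ℂ), sqrtI * Real.sin (α / 2)] := by
  ext i
  fin_cases i <;> simp [psi8]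

theorem psi8_zero_zero_one :
    psi8 α 0 0 1 = ![(Real.sin (α / 2) : ℂ), -sqrtI * Real.cos (α / 2)] := by
  ext i
  fin_cases i <;> simp [psi8]

theorem psi8_one_zero_zero :
    psi8 α 1 0 0 = ![(Real.cos (α / 2) : ℂ), -sqrtI * Real.sin (α / 2)] := by
  ext i
  fin_cases i <;> simp [psi8]

theorem psi8_zero_one_zero :
    psi8 α 0 1 0 = ![sqrtI * Real.sin (α / 2), (Real.cos (α / 2) : ℂ)] := by
  ext i
  fin_cases i <;> simp [psi8]

theorem cos_half_sq_add_sin_half_sq :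
    (Real.cos (α / 2) : ℂ) ^ 2 + (Real.sin (α / 2) : ℂ) ^ 2 = 1 := by
  exact_mod_cast Real.cos_sq_add_sin_sq (α / 2)

theorem cos_half_sq_sub_sin_half_sq :
    (Real.cos (α / 2) : ℂ) ^ 2 - (Real.sin (α / 2) : ℂ) ^ 2 = Real.cos α := by
  have h := Real.cos_two_mul' (α / 2)
  rw [mul_div_cancel₀ α two_ne_zero] at h
  exact_mod_cast h.symm

theorem two_mul_sin_half_mul_cos_half :
    2 * (Real.sin (α / 2) : ℂ) * Real.cos (α / 2) = Real.sin α := by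
  have h := Real.sin_two_mul (α / 2)
  rw [mul_div_cancel₀ α two_ne_zero] at h
  exact_mod_cast h.symm

theorem bloch_psi8_zero_zero_zero :
    bloch (psi8 α 0 0 0) (psi8 α 0 0 1) (psi8 α 0 0 0) = ![0, 0, 1] := by
  have ha : star (psi8 α 0 0 0) ⬝ᵥ psi8 α 0 0 0 = 1 := by
    simp only [psi8_zero_zero_zero, vec2_dotProduct, Pi.star_apply, cons_val_zero, cons_val_one,
      star_mul', Complex.star_def, Complex.conj_ofReal]
    linear_combination cos_half_sq_add_sin_half_sq α +
      (Real.sin (α / 2) : ℂ) ^ 2 * conj_sqrtI_mul_sqrtI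
  have hb : star (psi8 α 0 0 1) ⬝ᵥ psi8 α 0 0 0 = 0 := by
    simp only [psi8_zero_zero_zero, psi8_zero_zero_one, vec2_dotProduct, Pi.star_apply,
      cons_val_zero, cons_val_one, star_mul', star_neg, Complex.star_def, Complex.conj_ofReal]
    linear_combination -(Real.sin (α / 2) : ℂ) * Real.cos (α / 2) * conj_sqrtI_mul_sqrtI
  simp [bloch, ha, hb]

theorem bloch_psi8_one_zero_zero :
    bloch (psi8 α 0 0 0) (psi8 α 0 0 1) (psi8 α 1 0 0) =
      ![Real.sin (2 * α), 0, Real.cos (2 * α)] := by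
  have ha : star (psi8 α 0 0 0) ⬝ᵥ psi8 α 1 0 0 = Real.cos α := by
    simp only [psi8_zero_zero_zero, psi8_one_zero_zero, vec2_dotProduct, Pi.star_apply,
      cons_val_zero, cons_val_one, star_mul', Complex.star_def, Complex.conj_ofReal]
    linear_combination cos_half_sq_sub_sin_half_sq α -
      (Real.sin (α / 2) : ℂ) ^ 2 * conj_sqrtI_mul_sqrtI
  have hb : star (psi8 α 0 0 1) ⬝ᵥ psi8 α 1 0 0 = Real.sin α := by
    simp only [psi8_zero_zero_one, psi8_one_zero_zero, vec2_dotProduct, Pi.star_apply,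
      cons_val_zero, cons_val_one, star_mul', star_neg, Complex.star_def, Complex.conj_ofReal]
    linear_combination two_mul_sin_half_mul_cos_half α +
      (Real.sin (α / 2) : ℂ) * Real.cos (α / 2) * conj_sqrtI_mul_sqrtI
  simp only [bloch, ha, hb, Complex.star_def, Complex.conj_ofReal, ← Complex.ofReal_mul,
    Complex.ofReal_re, Complex.ofReal_im, mul_zero, Complex.normSq_ofReal, ← sq,
    Real.sin_two_mul, Real.cos_two_mul']
  ring_nf

theorem bloch_psi8_zero_one_zero :
    bloch (psi8 α 0 0 0) (psi8 α 0 0 1) (psi8 α 0 1 0) =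
      ![-(Real.sin α * Real.cos α), Real.sin α, -Real.cos α ^ 2] := by
  have ha : star (psi8 α 0 0 0) ⬝ᵥ psi8 α 0 1 0 = ((Real.sqrt 2 / 2 : ℝ) : ℂ) * Real.sin α := by
    simp only [psi8_zero_zero_zero, psi8_zero_one_zero, sqrtI_eq, vec2_dotProduct, Pi.star_apply,
      cons_val_zero, cons_val_one, star_mul', star_add, star_one, Complex.star_def,
      Complex.conj_ofReal, Complex.conj_I]
    linear_combination ((Real.sqrt 2 / 2 : ℝ) : ℂ) * two_mul_sin_half_mul_cos_half α
  have hb : star (psi8 α 0 0 1) ⬝ᵥ psi8 α 0 1 0 =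
      ((Real.sqrt 2 / 2 : ℝ) : ℂ) * (-Real.cos α + Complex.I) := by
    simp only [psi8_zero_zero_one, psi8_zero_one_zero, sqrtI_eq, vec2_dotProduct, Pi.star_apply,
      cons_val_zero, cons_val_one, star_mul', star_neg, star_add, star_one, Complex.star_def,
      Complex.conj_ofReal, Complex.conj_I]
    linear_combination ((Real.sqrt 2 / 2 : ℝ) : ℂ) *
      (Complex.I * cos_half_sq_add_sin_half_sq α - cos_half_sq_sub_sin_half_sq α)
  have hsqrt : (Real.sqrt 2 / 2) ^ 2 = 1 / 2 := by
    rw [div_pow, Real.sq_sqrt zero_le_two]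
    norm_num
  ext i
  fin_cases i <;> simp only [bloch, ha, hb, star_mul', Complex.star_def, Complex.conj_ofReal,
    mul_assoc, Complex.re_ofReal_mul, Complex.im_ofReal_mul, Complex.add_re, Complex.add_im,
    Complex.neg_re, Complex.neg_im, Complex.ofReal_re, Complex.ofReal_im, Complex.I_re,
    Complex.I_im, Complex.normSq_apply, Fin.zero_eta, Fin.mk_one, Fin.reduceFinMk, cons_val]
  · linear_combination -2 * Real.sin α * Real.cos α * hsqrt
  · linear_combination 2 * Real.sin α * hsqrt
  · linear_combination (Real.sin α ^ 2 - Real.cos α ^ 2 - 1) * hsqrt +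
      Real.sin_sq_add_cos_sq α / 2

/-- The states `ψ_{000}`, `ψ_{100}`, `ψ_{010}`, one from each of three encoding bases: the
states at which the Bell weights are tested. -/
noncomputable def probe : Fin 3 → Fin 2 → ℂ :=
  ![psi8 α 0 0 0, psi8 α 1 0 0, psi8 α 0 1 0]

theorem bloch_probe (k : Fin 3) :
    bloch (psi8 α 0 0 0) (psi8 α 0 0 1) (probe α k) =
      !![0, 0, 1;
        Real.sin (2 * α), 0, Real.cos (2 * α);
        -(Real.sin α * Real.cos α), Real.sin α, -Real.cos α ^ 2] k := by
  fin_cases k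
  · exact bloch_psi8_zero_zero_zero α
  · exact bloch_psi8_one_zero_zero α
  · exact bloch_psi8_zero_one_zero α

theorem sum_bloch_probe_sq (k : Fin 3) :
    ∑ i, bloch (psi8 α 0 0 0) (psi8 α 0 0 1) (probe α k) i ^ 2 = 1 := by
  rw [bloch_probe, Fin.sum_univ_three]
  fin_cases k
  · simp
  · simp
  · change (-(Real.sin α * Real.cos α)) ^ 2 + Real.sin α ^ 2 + (-Real.cos α ^ 2) ^ 2 = 1
    linear_combination (Real.cos α ^ 2 + 1) * Real.sin_sq_add_cos_sq α

theorem det_bloch_probe_sq :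
    (of fun k i => bloch (psi8 α 0 0 0) (psi8 α 0 0 1) (probe α k) i ^ 2).det =
      Real.sin (2 * α) ^ 2 * Real.sin α ^ 2 := by
  simp [bloch_probe, det_fin_three]

theorem stmt2_general {α β lam0 lam1 lam2 lam3 : ℝ} (hα : Real.sin (2 * α) ≠ 0)
    (hlam : lam0 + lam1 + lam2 + lam3 = 1)
    (hprobe : ∀ k, coincidence
      (bellDiagonal (psi8 α 0 0 0) (psi8 α 0 0 1) lam0 lam1 lam2 lam3) (probe α k) = β / 2) :
    lam1 = β / 2 ∧ lam2 = β / 2 ∧ lam3 = β / 2 ∧ lam0 = 1 - 3 / 2 * β := by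
  have hsin : Real.sin α ≠ 0 := by
    rw [Real.sin_two_mul] at hα
    exact right_ne_zero_of_mul (left_ne_zero_of_mul hα)
  have hdet := (det_bloch_probe_sq α).trans_ne (mul_ne_zero (pow_ne_zero 2 hα) (pow_ne_zero 2 hsin))
  obtain ⟨h1, h2, h3⟩ :=
    bellDiagonal_weights_eq_of_coincidence (probe α) (sum_bloch_probe_sq α) hdet hprobe
  exact ⟨h1, h2, h3, by linarith⟩

end EightState

/-- **Noise symmetrisation, 8-state case.** A Bell-diagonal two-qubit state giving
bit error rate exactly `β` in all four 8-state bases has `λ₁ = λ₂ = λ₃ = β/2` and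
`λ₀ = 1 - (3/2)β`. -/
theorem stmt2 (α β lam0 lam1 lam2 lam3 : ℝ)
    (hα : α ∈ Set.Ioo 0 (Real.pi / 2)) (hcos : Real.cos α = 1 / Real.sqrt 3)
    (hβ : β ∈ Set.Icc (0:ℝ) (1/2))
    (hlam : lam0 + lam1 + lam2 + lam3 = 1) :
    let e0 := psi8 α 0 0 0
    let e1 := psi8 α 0 0 1
    let Psim := (Real.sqrt 2 : ℂ)⁻¹ • (tens e0 e1 - tens e1 e0)
    let Psip := (Real.sqrt 2 : ℂ)⁻¹ • (tens e0 e1 + tens e1 e0)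
    let Phim := (Real.sqrt 2 : ℂ)⁻¹ • (tens e0 e0 - tens e1 e1)
    let Phip := (Real.sqrt 2 : ℂ)⁻¹ • (tens e0 e0 + tens e1 e1)
    let ρ := (lam0 : ℂ) • outerProd Psim + (lam1 : ℂ) • outerProd Phim +
      (lam2 : ℂ) • outerProd Psip + (lam3 : ℂ) • outerProd Phip
    (∀ u w g : Fin 2,
        star (tens (psi8 α u w g) (psi8 α u w g)) ⬝ᵥ
          ρ.mulVec (tens (psi8 α u w g) (psi8 α u w g)) = (β / 2 : ℂ)) →
    lam1 = β / 2 ∧ lam2 = β / 2 ∧ lam3 = β / 2 ∧ lam0 = 1 - 3/2 * β := by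
  intro e0 e1 Psim Psip Phim Phip ρ H
  have hsin : 0 < Real.sin (2 * α) :=
    Real.sin_pos_of_pos_of_lt_pi (by linarith [hα.1]) (by linarith [hα.2])
  exact stmt2_general hsin.ne' hlam fun
    | 0 => H 0 0 0
    | 1 => H 1 0 0
    | 2 => H 0 1 0
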